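/- Let H: ℝⁿ → ℝⁿ be a continuous map at bounded distance from the identity (sup‖H(x) − x‖ < ∞). Then H is surjective. -/

import Mathlib

/-- Sum over lattice paths of the cup product of the coboundaries of the `F i`, mod 2. -/
def cupW {ι : Type} [DecidableEq ι] (F : ι → (ι → ℕ) → ZMod 2) :
    List ι → Finset ι → (ι → ℕ) → ZMod 2
  | [], _, _ => 1
  | i :: l, T, v => ∑ m ∈ T, (F i (v + Pi.single m 1) - F i v) *
      cupW F l (T.erase m) (v + Pi.single m 1)

theorem sum_symm_zero {ι : Type} [DecidableEq ι] (T : Finset ι) (s : ι → ι → ZMod 2)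
    (hs : ∀ a b, s a b = s b a) : ∑ m ∈ T, ∑ k ∈ T.erase m, s m k = 0 := by
  rw [Finset.sum_sigma']
  refine Finset.sum_involution (fun p _ => ⟨p.2, p.1⟩) ?_ ?_ ?_ ?_
  · intro p _
    dsimp only
    rw [hs p.2 p.1]
    exact CharTwo.add_self_eq_zero _
  · rintro ⟨a, b⟩ h _ h2
    simp at h h2
    grind
  · rintro ⟨a, b⟩ h
    simp at h ⊢
    grind
  · rintro ⟨a, b⟩ h
    rfl

theorem sum_swap_erase {ι : Type} [DecidableEq ι] (T : Finset ι) (s : ι → ι → ZMod 2) :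
    ∑ m ∈ T, ∑ k ∈ T.erase m, s m k = ∑ m ∈ T, ∑ k ∈ T.erase m, s k m := by
  apply Finset.sum_comm'
  intro x y
  simp
  grind

theorem cupW_closed {ι : Type} [DecidableEq ι] (F : ι → (ι → ℕ) → ZMod 2) (l : List ι) :
    ∀ (T : Finset ι) (v : ι → ℕ),
      ∑ m ∈ T, cupW F l (T.erase m) (v + Pi.single m 1) = ∑ m ∈ T, cupW F l (T.erase m) v := by
  induction l with
  | nil => intro T v; simp [cupW]
  | cons i l ih =>
    intro T v
    simp only [cupW, sub_mul, Finset.sum_sub_distrib]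
    have hA : ∑ m ∈ T, ∑ k ∈ T.erase m, F i (v + Pi.single m 1 + Pi.single k 1) *
        cupW F l ((T.erase m).erase k) (v + Pi.single m 1 + Pi.single k 1) = 0 := by
      apply sum_symm_zero
      intro a b
      rw [add_right_comm, Finset.erase_right_comm]
    have hB : ∑ m ∈ T, ∑ k ∈ T.erase m, F i (v + Pi.single m 1) *
        cupW F l ((T.erase m).erase k) (v + Pi.single m 1 + Pi.single k 1) =
        ∑ m ∈ T, ∑ k ∈ T.erase m, F i (v + Pi.single m 1) *
        cupW F l ((T.erase m).erase k) (v + Pi.single m 1) := by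
      refine Finset.sum_congr rfl fun m _ => ?_
      rw [← Finset.mul_sum, ← Finset.mul_sum, ih]
    have hB2 : ∑ m ∈ T, ∑ k ∈ T.erase m, F i (v + Pi.single k 1) *
        cupW F l ((T.erase m).erase k) (v + Pi.single k 1) =
        ∑ m ∈ T, ∑ k ∈ T.erase m, F i (v + Pi.single m 1) *
        cupW F l ((T.erase m).erase k) (v + Pi.single m 1) := by
      rw [sum_swap_erase]
      refine Finset.sum_congr rfl fun m _ => Finset.sum_congr rfl fun k _ => ?_
      rw [Finset.erase_right_comm]
    have hC : ∑ m ∈ T, ∑ k ∈ T.erase m, F i v *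
        cupW F l ((T.erase m).erase k) (v + Pi.single k 1) = 0 := by
      have : ∑ m ∈ T, ∑ k ∈ T.erase m, F i v *
          cupW F l ((T.erase m).erase k) (v + Pi.single k 1) =
          ∑ m ∈ T, ∑ k ∈ T.erase m, F i v * cupW F l ((T.erase m).erase k) v := by
        refine Finset.sum_congr rfl fun m _ => ?_
        rw [← Finset.mul_sum, ← Finset.mul_sum, ih]
      rw [this]
      apply sum_symm_zero
      intro a b
      rw [Finset.erase_right_comm]
    rw [hA, hB, hB2, hC, zero_sub, sub_zero, CharTwo.neg_eq]

theorem cupW_div {ι : Type} [DecidableEq ι] (F : ι → (ι → ℕ) → ZMod 2) (i : ι) (l : List ι)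
    (T : Finset ι) (v : ι → ℕ) :
    cupW F (i :: l) T v = ∑ m ∈ T, (F i (v + Pi.single m 1) *
      cupW F l (T.erase m) (v + Pi.single m 1) - F i v * cupW F l (T.erase m) v) := by
  simp only [cupW, sub_mul, Finset.sum_sub_distrib]
  rw [← Finset.mul_sum, ← Finset.mul_sum, cupW_closed]

theorem cupW_face {ι : Type} [DecidableEq ι] (F : ι → (ι → ℕ) → ZMod 2) (m : ι) (a : ℕ)
    (c : ZMod 2) (hF : ∀ v, v m = a → F m v = c) (l : List ι) :
    ∀ (T : Finset ι) (v : ι → ℕ), m ∈ l → m ∉ T → v m = a → cupW F l T v = 0 := by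
  induction l with
  | nil => intro T v h; simp at h
  | cons i l ih =>
    intro T v hl hT hv
    rw [cupW]
    refine Finset.sum_eq_zero fun k hk => ?_
    have hkm : m ≠ k := by rintro rfl; exact hT hk
    have hv2 : (v + Pi.single k 1 : ι → ℕ) m = a := by simp [hkm, hv]
    by_cases him : m = i
    · subst him
      rw [hF _ hv2, hF _ hv, sub_self, zero_mul]
    · rw [ih _ _ (by simpa [him] using hl) (by simp [hT]) hv2, mul_zero]

theorem cupW_near {ι : Type} [DecidableEq ι] (F : ι → (ι → ℕ) → ZMod 2) (l : List ι) :
    ∀ (T : Finset ι) (v : ι → ℕ), cupW F l T v ≠ 0 → ∀ i ∈ l, ∃ p q : ι → ℕ, F i p ≠ F i q ∧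
      ∀ j, v j ≤ p j ∧ v j ≤ q j ∧ p j ≤ v j + (if j ∈ T then 1 else 0) ∧
        q j ≤ v j + (if j ∈ T then 1 else 0) := by
  induction l with
  | nil => intro T v _ i h; simp at h
  | cons i l ih =>
    intro T v hW k hk
    rw [cupW] at hW
    obtain ⟨m, hm, hne⟩ := Finset.exists_ne_zero_of_sum_ne_zero hW
    have h1 := left_ne_zero_of_mul hne
    have h2 := right_ne_zero_of_mul hne
    rcases List.mem_cons.1 hk with rfl | hk
    · refine ⟨_, _, sub_ne_zero.1 h1, fun j => ?_⟩
      by_cases hj : j = m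
      · subst hj; simp [hm]
      · simp [hj]
    · obtain ⟨p, q, hpq, hb⟩ := ih _ _ h2 k hk
      refine ⟨p, q, hpq, fun j => ?_⟩
      have := hb j
      by_cases hj : j = m
      · subst hj; simp [hm] at this ⊢; omega
      · simpa [hj] using this

/-- the domain of base points -/
def boxD {ι : Type} [DecidableEq ι] [Fintype ι] (N : ℕ) (T : Finset ι) : Finset (ι → ℕ) :=
  Fintype.piFinset (fun t => if t ∈ T then Finset.range N else {N})

theorem boxD_telescope {ι : Type} [DecidableEq ι] [Fintype ι] (N : ℕ) (T : Finset ι) (m : ι)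
    (hm : m ∈ T) (g : (ι → ℕ) → ZMod 2) :
    ∑ v ∈ boxD N T, (g (v + Pi.single m 1) - g v) =
      ∑ v ∈ boxD N (T.erase m), (g v - g (Function.update v m 0)) := by
  have h1 : ∀ h : (ι → ℕ) → ZMod 2, ∑ v ∈ boxD N T, h v =
      ∑ v ∈ boxD N (T.erase m), ∑ a ∈ Finset.range N, h (Function.update v m a) := by
    intro h
    rw [← Finset.sum_product']
    symm
    refine Finset.sum_bij' (fun p _ => Function.update p.1 m p.2)
      (fun v _ => (Function.update v m N, v m)) ?_ ?_ ?_ ?_ ?_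
    · rintro ⟨w, a⟩ hp
      simp only [boxD, Finset.mem_product, Fintype.mem_piFinset] at hp ⊢
      intro j
      by_cases hj : j = m
      · subst hj; simpa [hm] using hp.2
      · simpa [hj] using hp.1 j
    · intro v hv
      simp only [boxD, Finset.mem_product, Fintype.mem_piFinset] at hv ⊢
      refine ⟨fun j => ?_, by simpa [hm] using hv m⟩
      by_cases hj : j = m
      · subst hj; simp
      · simpa [hj] using hv j
    · rintro ⟨w, a⟩ hp
      simp only [boxD, Finset.mem_product, Fintype.mem_piFinset] at hp
      have := hp.1 m
      simp at this
      simp [← this]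
    · intro v hv
      simp
    · intro p hp
      rfl
  rw [h1]
  refine Finset.sum_congr rfl fun v hv => ?_
  have hvm : v m = N := by
    simp only [boxD, Fintype.mem_piFinset] at hv
    simpa using hv m
  have h2 : ∀ a, Function.update v m a + Pi.single m 1 = Function.update v m (a + 1) := by
    intro a
    ext j
    by_cases hj : j = m
    · subst hj; simp
    · simp [hj]
  simp only [h2]
  rw [Finset.sum_range_sub (fun a => g (Function.update v m a)), ← hvm, Function.update_eq_self]

theorem cupW_total {ι : Type} [DecidableEq ι] [Fintype ι] (N : ℕ) (F : ι → (ι → ℕ) → ZMod 2)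
    (h0 : ∀ i v, v i = 0 → F i v = 0) (hN : ∀ i v, v i = N → F i v = 1) (l : List ι)
    (hl : l.Nodup) : ∑ v ∈ boxD N l.toFinset, cupW F l l.toFinset v = 1 := by
  induction l with
  | nil => simp [cupW, boxD]
  | cons i l ih =>
    rw [List.nodup_cons] at hl
    have hT : (i :: l).toFinset.erase i = l.toFinset := by
      rw [List.toFinset_cons, Finset.erase_insert (by simpa using hl.1)]
    simp only [cupW_div]
    rw [Finset.sum_comm, Finset.sum_eq_single_of_mem i (by simp)]
    · rw [boxD_telescope N _ i (by simp)
        (fun v => F i v * cupW F l ((i :: l).toFinset.erase i) v), hT, ← ih hl.2]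
      refine Finset.sum_congr rfl fun v hv => ?_
      have hvm : v i = N := by
        simp only [boxD, Fintype.mem_piFinset] at hv
        simpa [hl.1] using hv i
      rw [hN i v hvm, h0 i (Function.update v i 0) (by simp)]
      simp
    · intro m hm hmi
      have hml : m ∈ l := by simpa [hmi] using hm
      rw [boxD_telescope N _ m hm
        (fun v => F i v * cupW F l ((i :: l).toFinset.erase m) v)]
      refine Finset.sum_eq_zero fun v hv => ?_
      have hvm : v m = N := by
        simp only [boxD, Fintype.mem_piFinset] at hv
        simpa using hv m
      rw [cupW_face F m N 1 (hN m) l _ v hml (by simp) hvm,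
        cupW_face F m 0 0 (h0 m) l _ (Function.update v m 0) hml (by simp) (by simp)]
      simp

theorem kuhn {n : ℕ} (N : ℕ) (F : Fin n → (Fin n → ℕ) → ZMod 2)
    (h0 : ∀ i v, v i = 0 → F i v = 0) (hN : ∀ i v, v i = N → F i v = 1) :
    ∃ v : Fin n → ℕ, (∀ j, v j < N) ∧ ∀ i, ∃ p q : Fin n → ℕ, F i p ≠ F i q ∧
      ∀ j, v j ≤ p j ∧ v j ≤ q j ∧ p j ≤ v j + 1 ∧ q j ≤ v j + 1 := by
  have h := cupW_total N F h0 hN (List.finRange n) (List.nodup_finRange n)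
  obtain ⟨v, hv, hne⟩ := Finset.exists_ne_zero_of_sum_ne_zero (h.trans_ne one_ne_zero)
  refine ⟨v, fun j => ?_, fun i => ?_⟩
  · simp only [boxD, Fintype.mem_piFinset] at hv
    simpa using hv j
  · obtain ⟨p, q, hpq, hb⟩ := cupW_near F _ _ v hne i (by simp)
    exact ⟨p, q, hpq, fun j => by simpa using hb j⟩

/-- A continuous map `H : ℝⁿ → ℝⁿ` at bounded distance from the identity is
surjective. -/
theorem stmt11 (n : ℕ) (H : (Fin n → ℝ) → (Fin n → ℝ)) (hcont : Continuous H)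
    (K : ℝ) (hK : ∀ x, ‖H x - x‖ ≤ K) :
    Function.Surjective H := by
  classical
  intro y
  have hK0 : 0 ≤ K := (norm_nonneg _).trans (hK 0)
  have hKi : ∀ x i, |H x i - x i| ≤ K := fun x i =>
    (norm_le_pi_norm (H x - x) i).trans (hK x)
  set R : ℝ := K + 1 with hR
  let X : ℕ → (Fin n → ℕ) → (Fin n → ℝ) := fun N v j => y j - R + 2 * R * (v j / (N + 1 : ℕ))
  have key : ∀ N : ℕ, ∃ a ∈ Metric.closedBall y R, ∀ i, ∃ p q : Fin n → ℝ,
      y i ≤ H p i ∧ H q i ≤ y i ∧ dist p a ≤ 2 * R * (1 / (N + 1 : ℕ)) ∧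
        dist q a ≤ 2 * R * (1 / (N + 1 : ℕ)) := by
    intro N
    have hNpos : (0 : ℝ) < ((N + 1 : ℕ) : ℝ) := by positivity
    have hRpos : 0 < R := by positivity
    obtain ⟨v, hv, hpq⟩ := kuhn (N + 1)
      (fun i v => if y i < H (X N v) i then (1 : ZMod 2) else 0) (by
        intro i v hvi
        have h1 := abs_le.1 (hKi (X N v) i)
        have h2 : X N v i = y i - R := by simp [X, hvi]
        rw [if_neg]
        rw [h2] at h1
        linarith [h1.2]) (by
        intro i v hvi
        have h1 := abs_le.1 (hKi (X N v) i)
        have h2 : X N v i = y i + R := by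
          simp only [X, hvi]
          rw [div_self hNpos.ne']
          ring
        rw [if_pos]
        rw [h2] at h1
        linarith [h1.1])
    have hd : ∀ p : Fin n → ℕ, (∀ j, v j ≤ p j ∧ p j ≤ v j + 1) →
        dist (X N p) (X N v) ≤ 2 * R * (1 / (N + 1 : ℕ)) := by
      intro p hp
      rw [dist_pi_le_iff (by positivity)]
      intro j
      have h1 : (v j : ℝ) ≤ p j := by exact_mod_cast (hp j).1
      have h2 : (p j : ℝ) ≤ v j + 1 := by exact_mod_cast (hp j).2
      have h3 : X N p j - X N v j = 2 * R * ((p j - v j) / (N + 1 : ℕ)) := by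
        simp only [X]; ring
      rw [Real.dist_eq, h3, abs_of_nonneg]
      · gcongr
        linarith
      · have : (0 : ℝ) ≤ p j - v j := by linarith
        positivity
    refine ⟨X N v, ?_, fun i => ?_⟩
    · rw [Metric.mem_closedBall, dist_pi_le_iff hRpos.le]
      intro j
      have h1 : (v j : ℝ) / (N + 1 : ℕ) ≤ 1 := by
        rw [div_le_one hNpos]
        exact_mod_cast (hv j).le
      have h2 : (0 : ℝ) ≤ (v j : ℝ) / (N + 1 : ℕ) := by positivity
      rw [Real.dist_eq, abs_le]
      simp only [X]
      constructor <;> nlinarith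
    · obtain ⟨p, q, hne, hb⟩ := hpq i
      have hp := hd p fun j => ⟨(hb j).1, (hb j).2.2.1⟩
      have hq := hd q fun j => ⟨(hb j).2.1, (hb j).2.2.2⟩
      by_cases h1 : y i < H (X N p) i <;> by_cases h2 : y i < H (X N q) i
      · simp [h1, h2] at hne
      · exact ⟨_, _, h1.le, not_lt.1 h2, hp, hq⟩
      · exact ⟨_, _, h2.le, not_lt.1 h1, hq, hp⟩
      · simp [h1, h2] at hne
  choose a ha p q hp hq hpa hqa using key
  obtain ⟨b, -, φ, hφ, hlim⟩ := (isCompact_closedBall y R).tendsto_subseq ha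
  have hz : Filter.Tendsto (fun k => 2 * R * (1 / ((φ k + 1 : ℕ) : ℝ))) Filter.atTop (nhds 0) := by
    have h1 : Filter.Tendsto (fun k : ℕ => 2 * R * (1 / ((k + 1 : ℕ) : ℝ))) Filter.atTop
        (nhds 0) := by
      have := (tendsto_one_div_add_atTop_nhds_zero_nat (𝕜 := ℝ)).const_mul (2 * R)
      simpa using this
    exact h1.comp hφ.tendsto_atTop
  have hlim2 : ∀ r : ℕ → Fin n → ℝ, (∀ N, dist (r N) (a N) ≤ 2 * R * (1 / ((N + 1 : ℕ) : ℝ))) →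
      Filter.Tendsto (fun k => H (r (φ k))) Filter.atTop (nhds (H b)) := by
    intro r hr
    have h1 : Filter.Tendsto (fun k => r (φ k)) Filter.atTop (nhds b) := by
      refine (tendsto_iff_of_dist ?_).1 hlim
      refine squeeze_zero (fun _ => dist_nonneg) (fun k => ?_) hz
      rw [dist_comm]
      exact hr (φ k)
    exact (hcont.tendsto b).comp h1
  refine ⟨b, funext fun i => le_antisymm ?_ ?_⟩
  · exact le_of_tendsto' ((tendsto_pi_nhds.1 (hlim2 (fun N => q N i) fun N => hqa N i)) i)
      fun k => hq (φ k) i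
  · exact ge_of_tendsto' ((tendsto_pi_nhds.1 (hlim2 (fun N => p N i) fun N => hpa N i)) i)
      fun k => hp (φ k) i
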